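/- Let F_q be a finite field, let m ≥ 1, let P ⊆ ℝ^m be a lattice polytope contained in the nonnegative orthant, and for 1 ≤ j ≤ m let ℓ_j denote the length of the projection of P onto the j-th coordinate axis. Let S = {p_1,…,p_n} ⊆ (F_q^*)^m be a set of n distinct points containing a box S_1 × ⋯ × S_m with S_j ⊆ F_q^*, |S_j| = s_j > ℓ_j. Let λ be a positive integer with λ < min_{1≤j≤m} s_j / ℓ_j, and let t be a positive integer such that n < Σ_{k=0}^{λ} |kP ∩ ℤ^m| and t > n − ∏_{j=1}^m (s_j − λ·ℓ_j). Then for every y = (y_1,…,y_n) ∈ F_q^n there exists a nonzero polynomial Q ∈ F_q[X_1,…,X_m,Y] with support contained in λ·Pyr(P) ∩ ℤ^{m+1} and Q(p_j, y_j) = 0 for all j, such that every f ∈ L_q(P) satisfying f(p_j) = y_j for at least t indices j satisfies Q(X_1,…,X_m, f(X_1,…,X_m)) = 0 identically. -/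

import Mathlib

open scoped Classical Pointwise

/-- The set of lattice points of a subset of `ℝ^m`, viewed as integer vectors. -/
def latticePts {m : ℕ} (P : Set (Fin m → ℝ)) : Set (Fin m → ℤ) :=
  {x | (fun j => (x j : ℝ)) ∈ P}

/-- `Pyr(P) ⊆ ℝ^{m+1}`: the convex hull of the point `(0,…,0,1)` together with `P × {0}`. -/
noncomputable def pyr {m : ℕ} (P : Set (Fin m → ℝ)) : Set (Fin (m + 1) → ℝ) :=
  convexHull ℝ ({Fin.snoc (0 : Fin m → ℝ) (1 : ℝ)} ∪ (fun x => Fin.snoc x (0 : ℝ)) '' P)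

/-!
A nonzero polynomial with exponents in a bounded set `A` has, after division by a monomial, degree
at most the width of `A` in each variable, so on a box of nonzero scalars it has at least
`∏ (s_j - width_j)` nonzeros. Slicing by the last coordinate shows that `λ·Pyr(P)` has
`∑ k ≤ λ, |kP ∩ ℤ^m|` lattice points, so if this exceeds `n` then linear algebra yields
a nonzero `Q` supported there and vanishing at the `n` points `(p_j, y_j)`. For `f` supported in
`P` the polynomial `Q(X, f(X))` is supported in `λP` and vanishes wherever `f` agrees with `y`;
agreement at `t` points leaves too few nonzeros on the box unless `Q(X, f(X)) = 0`.
-/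

theorem mul_card_le_card_of_le_card_cons_mem {α : Type*} {m d : ℕ} (T : Finset α)
    {B : Finset (Fin m → α)} {N : Finset (Fin (m + 1) → α)}
    (h : ∀ x ∈ B, d ≤ (T.filter fun c => Fin.cons c x ∈ N).card) : d * B.card ≤ N.card := by
  calc d * B.card ≤ ∑ x ∈ B, (T.filter fun c => Fin.cons c x ∈ N).card := by
        rw [mul_comm, ← smul_eq_mul]
        exact Finset.card_nsmul_le_sum _ _ _ h
    _ = (B.sigma fun x => T.filter fun c => Fin.cons c x ∈ N).card := (Finset.card_sigma _ _).symm
    _ ≤ N.card := by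
        refine Finset.card_le_card_of_injOn (fun w => Fin.cons w.2 w.1) ?_ ?_
        · rintro ⟨x, c⟩ hw
          exact (Finset.mem_filter.1 (Finset.mem_sigma.1 hw).2).2
        · rintro ⟨x, c⟩ - ⟨x', c'⟩ - hw
          obtain ⟨rfl, rfl⟩ := Fin.cons_inj.1 hw
          rfl

section NonzerosOnBoxes

variable {R : Type*} [CommRing R] [IsDomain R]

theorem card_sub_natDegree_le_card_eval_ne_zero {g : Polynomial R} (hg : g ≠ 0) (S : Finset R) :
    S.card - g.natDegree ≤ (S.filter fun c => g.eval c ≠ 0).card := by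
  have card_zeros_le : (S.filter fun c => ¬ g.eval c ≠ 0).card ≤ g.natDegree :=
    Polynomial.card_le_degree_of_subset_roots fun c hc =>
      (Polynomial.mem_roots hg).2 (not_not.1 (Finset.mem_filter.1 hc).2)
  have card_split := Finset.card_filter_add_card_filter_not (s := S) fun c => g.eval c ≠ 0
  omega

open MvPolynomial

theorem card_sub_degreeOf_le_card_eval_cons_ne_zero {m : ℕ} (g : MvPolynomial (Fin (m + 1)) R)
    (S : Finset R) {x : Fin m → R} (hx : eval x (finSuccEquiv R m g).leadingCoeff ≠ 0) :
    S.card - degreeOf 0 g ≤ (S.filter fun c => eval (Fin.cons c x) g ≠ 0).card := by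
  have natDegree_eq : ((finSuccEquiv R m g).map (eval x)).natDegree = degreeOf 0 g := by
    rw [Polynomial.natDegree_map_of_leadingCoeff_ne_zero _ hx, natDegree_finSuccEquiv]
  have map_ne_zero : (finSuccEquiv R m g).map (eval x) ≠ 0 := fun h =>
    hx (by rw [Polynomial.leadingCoeff, ← Polynomial.coeff_map, h, Polynomial.coeff_zero])
  simpa only [natDegree_eq, eval_eq_eval_mv_eval'] using
    card_sub_natDegree_le_card_eval_ne_zero map_ne_zero S

theorem prod_card_sub_degreeOf_le_card_eval_ne_zero {m : ℕ} {g : MvPolynomial (Fin m) R}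
    (hg : g ≠ 0) (S : Fin m → Finset R) :
    ∏ j, ((S j).card - degreeOf j g) ≤
      ((Fintype.piFinset S).filter fun x => eval x g ≠ 0).card := by
  induction m with
  | zero =>
    obtain ⟨c, rfl⟩ := C_surjective (Fin 0) g
    have c_ne_zero : c ≠ 0 := by simpa using hg
    simp [c_ne_zero]
  | succ m ih =>
    set c := (finSuccEquiv R m g).leadingCoeff
    have c_ne_zero : c ≠ 0 := by simpa [c] using hg
    have tail_le : ∏ j : Fin m, ((S j.succ).card - degreeOf j.succ g) ≤
        ((Fintype.piFinset fun j : Fin m => S j.succ).filter fun x => eval x c ≠ 0).card :=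
      (Finset.prod_le_prod' fun j _ =>
        Nat.sub_le_sub_left (degreeOf_coeff_finSuccEquiv g j _) _).trans (ih c_ne_zero _)
    rw [Fin.prod_univ_succ]
    refine (Nat.mul_le_mul_left _ tail_le).trans
      (mul_card_le_card_of_le_card_cons_mem (S 0) fun x hx => ?_)
    obtain ⟨hxS, hxc⟩ := Finset.mem_filter.1 hx
    refine (card_sub_degreeOf_le_card_eval_cons_ne_zero g (S 0) hxc).trans
      (Finset.card_le_card (Finset.monotone_filter_right _ fun a ha hag => ?_))
    simp_all [Fin.forall_fin_succ]

end NonzerosOnBoxes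

section MonomialFactor

open MvPolynomial

variable {R σ : Type*} [CommSemiring R]

theorem exists_mem_support_eq_degreeOf {g : MvPolynomial σ R} (hg : g ≠ 0) (j : σ) :
    ∃ u ∈ g.support, u j = degreeOf j g := by
  obtain ⟨u, hu, h⟩ := Finset.exists_mem_eq_sup _ (support_nonempty.2 hg) fun u => u j
  exact ⟨u, hu, by rw [degreeOf_eq_sup, h]⟩

theorem monomial_one_dvd_of_forall_le {g : MvPolynomial σ R} {a : σ →₀ ℕ}
    (ha : ∀ u ∈ g.support, a ≤ u) : monomial a 1 ∣ g := by
  rw [monomial_one_dvd_iff_modMonomial_eq_zero]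
  ext u
  by_cases hau : a ≤ u
  · rw [coeff_modMonomial_of_le g hau, coeff_zero]
  · rw [coeff_modMonomial_of_not_le g hau, coeff_zero]
    exact notMem_support_iff.1 fun hu => hau (ha u hu)

theorem exists_eq_monomial_mul_degreeOf_add_eq {g : MvPolynomial σ R} (hg : g ≠ 0) :
    ∃ (a : σ →₀ ℕ) (h : MvPolynomial σ R), g = monomial a 1 * h ∧
      ∀ j, ∃ u ∈ g.support, ∃ v ∈ g.support, degreeOf j h + v j = u j := by
  have nonempty := support_nonempty.2 hg
  obtain ⟨a, a_def⟩ : ∃ a, a = g.support.inf' nonempty id := ⟨_, rfl⟩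
  obtain ⟨h, g_eq⟩ : monomial a 1 ∣ g :=
    monomial_one_dvd_of_forall_le fun u hu => a_def ▸ Finset.inf'_le id hu
  refine ⟨a, h, g_eq, fun j => ?_⟩
  obtain ⟨v, hv, inf_eq⟩ := Finset.exists_mem_eq_inf' nonempty fun u => u j
  have a_apply : a j = v j := by
    rw [← inf_eq, a_def]
    exact Finset.apply_inf'_eq_inf'_comp nonempty (fun u : σ →₀ ℕ => u j) fun _ _ => rfl
  obtain ⟨u, hu, u_apply⟩ := exists_mem_support_eq_degreeOf (right_ne_zero_of_mul (g_eq ▸ hg)) j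
  refine ⟨a + u, ?_, v, hv, by rw [Finsupp.add_apply]; omega⟩
  rwa [g_eq, mem_support_iff, coeff_monomial_mul, one_mul, ← mem_support_iff]

end MonomialFactor

section AxisWidth

variable {σ : Type*}

/-- The length of the projection of `A` onto the `j`-th coordinate axis. As `sSup` and `sInf` take
the value `0` on unbounded sets of reals, this is only meaningful for bounded `A`. -/
noncomputable def axisWidth (A : Set (σ → ℝ)) (j : σ) : ℝ :=
  sSup ((fun x => x j) '' A) - sInf ((fun x => x j) '' A)

theorem sub_le_axisWidth {A : Set (σ → ℝ)} (hA : Bornology.IsBounded A)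
    {x y : σ → ℝ} (hx : x ∈ A) (hy : y ∈ A) (j : σ) : x j - y j ≤ axisWidth A j :=
  sub_le_sub (le_csSup (hA.image_eval j).bddAbove ⟨x, hx, rfl⟩)
    (csInf_le (hA.image_eval j).bddBelow ⟨y, hy, rfl⟩)

theorem axisWidth_smul {r : ℝ} (hr : 0 ≤ r) (A : Set (σ → ℝ)) (j : σ) :
    axisWidth (r • A) j = r * axisWidth A j := by
  have image_smul : (fun x : σ → ℝ => x j) '' (r • A) = r • (fun x => x j) '' A :=
    Set.image_smul_comm _ _ _ fun _ => rfl
  rw [axisWidth, axisWidth, image_smul, Real.sSup_smul_of_nonneg hr, Real.sInf_smul_of_nonneg hr,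
    smul_eq_mul, smul_eq_mul, mul_sub]

end AxisWidth

section LatticePoints

variable {m : ℕ}

theorem finite_latticePts {A : Set (Fin m → ℝ)} (hA : Bornology.IsBounded A) :
    (latticePts A).Finite := by
  obtain ⟨a, ha⟩ := hA.bddBelow
  obtain ⟨b, hb⟩ := hA.bddAbove
  exact (Set.finite_Icc (fun j => ⌈a j⌉) fun j => ⌊b j⌋).subset fun x hx =>
    ⟨fun j => Int.ceil_le.2 (ha hx j), fun j => Int.le_floor.2 (hb hx j)⟩

theorem ncard_setOf_natCast_mem {A : Set (Fin m → ℝ)} (hA : A ⊆ {x | ∀ j, 0 ≤ x j}) :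
    {u : Fin m →₀ ℕ | (fun j => (u j : ℝ)) ∈ A}.ncard = (latticePts A).ncard := by
  have injective : Function.Injective fun (u : Fin m →₀ ℕ) j => (u j : ℤ) := fun u v h =>
    Finsupp.ext fun j => Nat.cast_injective (congrFun h j)
  rw [← Set.ncard_image_of_injective _ injective]
  congr 1
  ext x
  constructor
  · rintro ⟨u, hu, rfl⟩
    simpa [latticePts] using hu
  · intro hx
    have x_nonneg : ∀ j, 0 ≤ x j := fun j => Int.cast_nonneg_iff.1 (hA hx j)
    lift x to Fin m → ℕ using x_nonneg
    exact ⟨Finsupp.equivFunOnFinite.symm x, by simpa [latticePts] using hx, rfl⟩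

end LatticePoints

section Pyramid

variable {m : ℕ} {P : Set (Fin m → ℝ)}

theorem exists_eq_snoc_of_mem_pyr (hP : Convex ℝ P) (hPne : P.Nonempty) {z : Fin (m + 1) → ℝ}
    (hz : z ∈ pyr P) :
    ∃ x ∈ P, ∃ c ∈ Set.Icc (0 : ℝ) 1, z = Fin.snoc ((1 - c) • x) c := by
  have convex_base : Convex ℝ ((fun x : Fin m → ℝ => (Fin.snoc x 0 : Fin (m + 1) → ℝ)) '' P) := by
    refine hP.is_linear_image ⟨fun x y => ?_, fun c x => ?_⟩ <;>
      ext j <;> cases j using Fin.lastCases <;> simp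
  rw [pyr, Set.singleton_union, convexHull_insert (hPne.image _), convex_base.convexHull_eq,
    convexJoin_singleton_left] at hz
  simp only [Set.mem_iUnion] at hz
  obtain ⟨_, ⟨x, hx, rfl⟩, c, d, hc, hd, hcd, rfl⟩ := hz
  obtain rfl : d = 1 - c := by linarith
  refine ⟨x, hx, c, ⟨hc, by linarith⟩, ?_⟩
  ext j
  cases j using Fin.lastCases <;> simp

theorem mem_smul_pyr_iff (hP : Convex ℝ P) (hPne : P.Nonempty) {r : ℝ} (hr : 0 ≤ r)
    {z : Fin (m + 1) → ℝ} :
    z ∈ r • pyr P ↔ z (Fin.last m) ∈ Set.Icc 0 r ∧ Fin.init z ∈ (r - z (Fin.last m)) • P := by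
  constructor
  · rintro ⟨_, hw, rfl⟩
    obtain ⟨x, hx, c, ⟨hc0, hc1⟩, rfl⟩ := exists_eq_snoc_of_mem_pyr hP hPne hw
    refine ⟨⟨?_, ?_⟩, x, hx, ?_⟩
    · simpa using mul_nonneg hr hc0
    · simpa using mul_le_of_le_one_right hr hc1
    · ext j
      simp only [Fin.init, Pi.smul_apply, Fin.snoc_castSucc, Fin.snoc_last, smul_eq_mul]
      ring
  · rintro ⟨⟨hz0, hzr⟩, x, hx, hxz⟩
    have convex_pyr : Convex ℝ (pyr P) := convex_convexHull ℝ _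
    have apex_mem : (Fin.snoc 0 1 : Fin (m + 1) → ℝ) ∈ pyr P :=
      subset_convexHull ℝ _ (Or.inl rfl)
    have base_mem : (Fin.snoc x 0 : Fin (m + 1) → ℝ) ∈ pyr P :=
      subset_convexHull ℝ _ (Or.inr ⟨x, hx, rfl⟩)
    rw [← add_sub_cancel (z (Fin.last m)) r, convex_pyr.add_smul hz0 (sub_nonneg.2 hzr)]
    refine ⟨_, Set.smul_mem_smul_set apex_mem, _, Set.smul_mem_smul_set base_mem, ?_⟩
    ext j
    cases j using Fin.lastCases with
    | last => simp
    | cast j => simpa [Fin.init] using congrFun hxz j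

theorem smul_pyr_subset_nonneg (hP : Convex ℝ P) (hPne : P.Nonempty)
    (hPpos : P ⊆ {x | ∀ j, 0 ≤ x j}) {r : ℝ} (hr : 0 ≤ r) :
    r • pyr P ⊆ {z | ∀ j, 0 ≤ z j} := by
  intro z hz j
  obtain ⟨⟨hz0, hzr⟩, x, hx, hxz⟩ := (mem_smul_pyr_iff hP hPne hr).1 hz
  cases j using Fin.lastCases with
  | last => exact hz0
  | cast j =>
    exact (mul_nonneg (sub_nonneg.2 hzr) (hPpos hx j)).trans_eq (congrFun hxz j)

theorem latticePts_smul_pyr (hP : Convex ℝ P) (hPne : P.Nonempty) (r : ℕ) :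
    latticePts ((r : ℝ) • pyr P) = ⋃ k ∈ (Finset.range (r + 1) : Set ℕ),
      (fun x : Fin m → ℤ => (Fin.snoc x ((r : ℤ) - k) : Fin (m + 1) → ℤ)) ''
        latticePts ((k : ℝ) • P) := by
  ext z
  simp only [Set.mem_iUnion, latticePts, Set.mem_ofPred_eq, mem_smul_pyr_iff hP hPne r.cast_nonneg]
  constructor
  · rintro ⟨⟨hz0, hzr⟩, hz⟩
    have last_le : z (Fin.last m) ≤ r := by exact_mod_cast hzr
    have last_nonneg : 0 ≤ z (Fin.last m) := by exact_mod_cast hz0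
    obtain ⟨k, hk⟩ := Int.eq_ofNat_of_zero_le (sub_nonneg.2 last_le)
    have hk_real : (r : ℝ) - z (Fin.last m) = k := by exact_mod_cast hk
    refine ⟨k, Finset.mem_range.2 (by omega), Fin.init z, hk_real ▸ hz, ?_⟩
    rw [← hk, sub_sub_cancel]
    exact Fin.snoc_init_self z
  · rintro ⟨k, hk, x, hx, rfl⟩
    have k_le : (k : ℝ) ≤ r := by simpa [Nat.lt_succ_iff] using hk
    simpa [Fin.init_def, k_le] using hx

theorem ncard_latticePts_smul_pyr (hP : Convex ℝ P) (hPne : P.Nonempty)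
    (hPbdd : Bornology.IsBounded P) (r : ℕ) :
    (latticePts ((r : ℝ) • pyr P)).ncard =
      ∑ k ∈ Finset.range (r + 1), (latticePts ((k : ℝ) • P)).ncard := by
  rw [latticePts_smul_pyr hP hPne, (Finset.finite_toSet _).ncard_biUnion,
    finsum_mem_coe_finset]
  · exact Finset.sum_congr rfl fun k _ =>
      Set.ncard_image_of_injective _ (Fin.snoc_left_injective (α := fun _ => ℤ) _)
  · exact fun k _ => (finite_latticePts (hPbdd.smul₀ _)).image _
  · intro k _ l _ hkl
    refine Set.disjoint_left.2 ?_
    rintro _ ⟨x, -, rfl⟩ ⟨y, -, hyx⟩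
    exact hkl (by simpa using (congrFun hyx (Fin.last m)).symm)

end Pyramid

section PolytopeSpace

open MvPolynomial

/-- The space `L(A)` of polynomials all of whose exponent vectors, viewed as real vectors, lie
in `A`. -/
noncomputable def polytopeSpace (R : Type*) [CommSemiring R] {σ : Type*} (A : Set (σ → ℝ)) :
    Submodule R (MvPolynomial σ R) :=
  restrictSupport R {u | (fun j => (u j : ℝ)) ∈ A}

variable {R : Type*} [CommSemiring R] {σ : Type*} {A B : Set (σ → ℝ)}

theorem monomial_mem_polytopeSpace {u : σ →₀ ℕ} (hu : (fun j => (u j : ℝ)) ∈ A) (c : R) :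
    monomial u c ∈ polytopeSpace R A :=
  (monomial_mem_restrictSupport R).2 (Or.inl hu)

theorem mul_mem_polytopeSpace {f g : MvPolynomial σ R} (hf : f ∈ polytopeSpace R A)
    (hg : g ∈ polytopeSpace R B) : f * g ∈ polytopeSpace R (A + B) := by
  intro u hu
  obtain ⟨v, hv, w, hw, rfl⟩ := Finset.mem_add.1 (support_mul f g hu)
  refine ⟨_, hf hv, _, hg hw, ?_⟩
  ext j
  simp

theorem pow_mem_polytopeSpace (hA : Convex ℝ A) (hAne : A.Nonempty) {f : MvPolynomial σ R}
    (hf : f ∈ polytopeSpace R A) (k : ℕ) : f ^ k ∈ polytopeSpace R ((k : ℝ) • A) := by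
  induction k with
  | zero =>
    rw [Nat.cast_zero, Set.zero_smul_set hAne, pow_zero]
    exact monomial_mem_polytopeSpace (by ext; simp) 1
  | succ k ih =>
    rw [pow_succ, Nat.cast_succ, hA.add_smul k.cast_nonneg zero_le_one, one_smul]
    exact mul_mem_polytopeSpace ih hf

theorem finrank_polytopeSpace (R : Type*) [CommRing R] [Nontrivial R] {m : ℕ}
    {A : Set (Fin m → ℝ)} (hA : A ⊆ {x | ∀ j, 0 ≤ x j}) :
    Module.finrank R (polytopeSpace R A) = (latticePts A).ncard := by
  rw [← ncard_setOf_natCast_mem hA]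
  exact Module.finrank_eq_nat_card_basis (basisRestrictSupport R _)

theorem prod_card_sub_axisWidth_le_card_eval_ne_zero {R : Type*} [CommRing R] [IsDomain R] {m : ℕ}
    {A : Set (Fin m → ℝ)} (hA : Bornology.IsBounded A) {g : MvPolynomial (Fin m) R} (hg : g ≠ 0)
    (hgA : g ∈ polytopeSpace R A) {S : Fin m → Finset R} (hS0 : ∀ j, ∀ c ∈ S j, c ≠ 0)
    (hAS : ∀ j, axisWidth A j ≤ (S j).card) :
    ∏ j, ((S j).card - axisWidth A j) ≤
      ((Fintype.piFinset S).filter fun x => eval x g ≠ 0).card := by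
  obtain ⟨a, h, g_eq, degree_eq⟩ := exists_eq_monomial_mul_degreeOf_add_eq hg
  have degreeOf_le : ∀ j, (degreeOf j h : ℝ) ≤ axisWidth A j := fun j => by
    obtain ⟨u, hu, v, hv, huv⟩ := degree_eq j
    rw [eq_sub_of_add_eq (by exact_mod_cast huv : (degreeOf j h : ℝ) + v j = u j)]
    exact sub_le_axisWidth hA (hgA hu) (hgA hv) j
  have nonzeros_subset : ((Fintype.piFinset S).filter fun x => eval x h ≠ 0) ⊆
      (Fintype.piFinset S).filter fun x => eval x g ≠ 0 := by
    refine Finset.monotone_filter_right _ fun x hx hxh => ?_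
    rw [g_eq, map_mul, eval_monomial, one_mul]
    exact mul_ne_zero (Finset.prod_ne_zero_iff.2 fun j _ =>
      pow_ne_zero _ (hS0 j _ (Fintype.mem_piFinset.1 hx j))) hxh
  calc ∏ j, ((S j).card - axisWidth A j)
      ≤ ∏ j, (((S j).card - degreeOf j h : ℕ) : ℝ) :=
        Finset.prod_le_prod (fun j _ => sub_nonneg.2 (hAS j)) fun j _ => by
          grw [← degreeOf_le j]
          rw [sub_le_iff_le_add]
          exact_mod_cast le_tsub_add
    _ ≤ ((Fintype.piFinset S).filter fun x => eval x h ≠ 0).card := by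
        exact_mod_cast prod_card_sub_degreeOf_le_card_eval_ne_zero
          (right_ne_zero_of_mul (g_eq ▸ hg)) S
    _ ≤ _ := by exact_mod_cast Finset.card_le_card nonzeros_subset

end PolytopeSpace

section Interpolation

open MvPolynomial

theorem exists_ne_zero_mem_eval_eq_zero {F σ ι : Type*} [Field F] [Fintype ι]
    {W : Submodule F (MvPolynomial σ F)} (hW : Fintype.card ι < Module.finrank F W)
    (z : ι → σ → F) : ∃ Q ∈ W, Q ≠ 0 ∧ ∀ i, eval (z i) Q = 0 := by
  have : Module.Finite F W := Module.finite_of_finrank_pos (Nat.zero_lt_of_lt hW)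
  let evalAt : W →ₗ[F] ι → F := (LinearMap.pi fun i => (aeval (z i)).toLinearMap) ∘ₗ W.subtype
  have ker_ne_bot : LinearMap.ker evalAt ≠ ⊥ :=
    LinearMap.ker_ne_bot_of_finrank_lt (by rwa [Module.finrank_fintype_fun_eq_card])
  obtain ⟨Q, hQ, hQ0⟩ := Submodule.exists_mem_ne_zero_of_ne_bot ker_ne_bot
  exact ⟨Q, Q.2, by simpa using hQ0, fun i => congrFun hQ i⟩

end Interpolation

section Substitution

open MvPolynomial

variable {R : Type*} [CommSemiring R] {m : ℕ}

theorem eval_aeval_snoc_X (x : Fin m → R) (f : MvPolynomial (Fin m) R)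
    (Q : MvPolynomial (Fin (m + 1)) R) :
    eval x (aeval (Fin.snoc X f) Q) = eval (Fin.snoc x (eval x f)) Q := by
  induction Q using MvPolynomial.induction_on with
  | C c => simp
  | add Q Q' hQ hQ' => simp only [map_add, hQ, hQ']
  | mul_X Q i hQ =>
    simp only [map_mul, hQ, aeval_X, eval_X]
    cases i using Fin.lastCases <;> simp

theorem aeval_snoc_X_monomial (f : MvPolynomial (Fin m) R) (u : Fin (m + 1) →₀ ℕ) (c : R) :
    aeval (Fin.snoc X f) (monomial u c) =
      monomial (Finsupp.equivFunOnFinite.symm (Fin.init u)) c * f ^ u (Fin.last m) := by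
  rw [aeval_monomial, Finsupp.prod_fintype _ _ fun _ => pow_zero _, Fin.prod_univ_castSucc,
    monomial_eq, Finsupp.prod_fintype _ _ fun _ => pow_zero _, mul_assoc]
  simp [Fin.init, algebraMap_eq]

theorem aeval_snoc_X_mem_polytopeSpace {P : Set (Fin m → ℝ)} (hP : Convex ℝ P)
    (hPne : P.Nonempty) {f : MvPolynomial (Fin m) R} (hf : f ∈ polytopeSpace R P) {r : ℝ}
    (hr : 0 ≤ r) {Q : MvPolynomial (Fin (m + 1)) R} (hQ : Q ∈ polytopeSpace R (r • pyr P)) :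
    aeval (Fin.snoc X f) Q ∈ polytopeSpace R (r • P) := by
  rw [Q.as_sum, map_sum]
  refine sum_mem fun u hu => ?_
  obtain ⟨⟨last_nonneg, last_le⟩, init_mem⟩ := (mem_smul_pyr_iff hP hPne hr).1 (hQ hu)
  rw [aeval_snoc_X_monomial, ← sub_add_cancel r (u (Fin.last m) : ℝ),
    hP.add_smul (sub_nonneg.2 last_le) last_nonneg]
  exact mul_mem_polytopeSpace (monomial_mem_polytopeSpace init_mem _)
    (pow_mem_polytopeSpace hP hPne hf _)

end Substitution

open MvPolynomial in
theorem card_eval_ne_zero_add_card_agree_le {R ι : Type*} [CommSemiring R] [Fintype ι] {m : ℕ}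
    {p : ι → Fin m → R} {y : ι → R} {Q : MvPolynomial (Fin (m + 1)) R}
    (hQ : ∀ i, eval (Fin.snoc (p i) (y i)) Q = 0) (f : MvPolynomial (Fin m) R)
    {B : Finset (Fin m → R)} (hB : ↑B ⊆ Set.range p) :
    (B.filter fun x => eval x (aeval (Fin.snoc X f) Q) ≠ 0).card +
      (Finset.univ.filter fun i => eval (p i) f = y i).card ≤ Fintype.card ι := by
  have nonzeros_subset :
      (B.filter fun x => eval x (aeval (Fin.snoc X f) Q) ≠ 0) ⊆
        (Finset.univ.filter fun i => ¬ eval (p i) f = y i).image p := by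
    intro x hx
    obtain ⟨hxB, hxQ⟩ := Finset.mem_filter.1 hx
    obtain ⟨i, rfl⟩ := hB hxB
    refine Finset.mem_image_of_mem p (Finset.mem_filter.2 ⟨Finset.mem_univ i, fun hi => hxQ ?_⟩)
    rw [eval_aeval_snoc_X, hi, hQ i]
  have card_split := Finset.card_filter_add_card_filter_not (s := Finset.univ)
    (fun i => eval (p i) f = y i)
  have card_le := (Finset.card_le_card nonzeros_subset).trans Finset.card_image_le
  rw [Finset.card_univ] at card_split
  omega

theorem basic_list_decoding_proj_general {F ι : Type*} [Field F] [Fintype ι] {m : ℕ}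
    {P : Set (Fin m → ℝ)} (hP : Convex ℝ P) (hPbdd : Bornology.IsBounded P) (hPne : P.Nonempty)
    (hPpos : P ⊆ {x | ∀ j, 0 ≤ x j}) (p : ι → Fin m → F) {S : Fin m → Finset F}
    (hS0 : ∀ j, ∀ c ∈ S j, c ≠ 0) (hSp : ↑(Fintype.piFinset S) ⊆ Set.range p) {lam t : ℕ}
    (hlam : ∀ j, lam * axisWidth P j ≤ (S j).card)
    (hcard : Fintype.card ι <
      ∑ k ∈ Finset.range (lam + 1), (latticePts ((k : ℝ) • P)).ncard)
    (ht : (Fintype.card ι : ℝ) - ∏ j, (((S j).card : ℝ) - lam * axisWidth P j) < t)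
    (y : ι → F) :
    ∃ Q : MvPolynomial (Fin (m + 1)) F, Q ≠ 0 ∧ Q ∈ polytopeSpace F ((lam : ℝ) • pyr P) ∧
      (∀ i, MvPolynomial.eval (Fin.snoc (p i) (y i)) Q = 0) ∧
      ∀ f ∈ polytopeSpace F P,
        t ≤ (Finset.univ.filter fun i => MvPolynomial.eval (p i) f = y i).card →
        MvPolynomial.aeval (Fin.snoc MvPolynomial.X f) Q = 0 := by
  have lam_nonneg : (0 : ℝ) ≤ lam := lam.cast_nonneg
  have card_lt_finrank :
      Fintype.card ι < Module.finrank F (polytopeSpace F ((lam : ℝ) • pyr P)) := by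
    rwa [finrank_polytopeSpace F (smul_pyr_subset_nonneg hP hPne hPpos lam_nonneg),
      ncard_latticePts_smul_pyr hP hPne hPbdd]
  obtain ⟨Q, hQ, hQ0, hQz⟩ := exists_ne_zero_mem_eval_eq_zero card_lt_finrank
    fun i => (Fin.snoc (p i) (y i) : Fin (m + 1) → F)
  refine ⟨Q, hQ0, hQ, hQz, fun f hf agree => ?_⟩
  by_contra hg
  have many_nonzeros := prod_card_sub_axisWidth_le_card_eval_ne_zero (hPbdd.smul₀ (lam : ℝ)) hg
    (aeval_snoc_X_mem_polytopeSpace hP hPne hf lam_nonneg hQ) hS0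
    (by simpa only [axisWidth_smul lam_nonneg] using hlam)
  simp only [axisWidth_smul lam_nonneg] at many_nonzeros
  have few_nonzeros : ((_ + _ : ℕ) : ℝ) ≤ Fintype.card ι :=
    Nat.cast_le.2 ((Nat.add_le_add_left agree _).trans
      (card_eval_ne_zero_add_card_agree_le hQz f hSp))
  push_cast at few_nonzeros
  linarith

/-- **Basic list-decoding theorem, projection-length version.**  Let `P ⊆ ℝ^m` be a lattice
polytope in the nonnegative orthant and let `ℓ_j` be the length of the projection of `P` onto
the `j`-th axis.  Let `S = {p_1,…,p_n} ⊆ (F_q^*)^m` be distinct points containing a box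
`S_1 × ⋯ × S_m` with `|S_j| = s_j > ℓ_j`.  Let `λ ≥ 1` with `λ < min_j s_j/ℓ_j` and let
`t ≥ 1` satisfy `n < Σ_{k=0}^{λ} |kP ∩ ℤ^m|` and `t > n − ∏_j (s_j − λ·ℓ_j)`.  Then for every
`y ∈ F_q^n` there is a nonzero `Q ∈ F_q[X_1,…,X_m,Y]` with support in `λ·Pyr(P) ∩ ℤ^{m+1}`
and `Q(p_j, y_j) = 0` for all `j`, such that every `f ∈ L_q(P)` agreeing with `y` on at
least `t` indices satisfies `Q(X, f(X)) = 0`. -/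
theorem basic_list_decoding_proj
    (Fq : Type*) [Field Fq] [Fintype Fq]
    (m : ℕ) (hm : 1 ≤ m) (P : Set (Fin m → ℝ))
    (hP : ∃ V : Finset (Fin m → ℤ),
      P = convexHull ℝ ((fun (v : Fin m → ℤ) (j : Fin m) => (v j : ℝ)) '' ↑V))
    (hPne : P.Nonempty)
    (hPpos : P ⊆ {x | ∀ j, 0 ≤ x j})
    (ℓ : Fin m → ℝ)
    (hℓ : ∀ j, ℓ j = sSup ((fun x => x j) '' P) - sInf ((fun x => x j) '' P))
    (n : ℕ) (p : Fin n → (Fin m → Fq)) (hp_inj : Function.Injective p)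
    (hp0 : ∀ j, ∀ i, p j i ≠ 0)
    (Sbox : Fin m → Finset Fq) (hSbox0 : ∀ j, ∀ c ∈ Sbox j, c ≠ 0)
    (s : Fin m → ℕ) (hs : ∀ j, (Sbox j).card = s j) (hsℓ : ∀ j, ℓ j < s j)
    (hboxS : ∀ q ∈ Fintype.piFinset Sbox, ∃ j : Fin n, p j = q)
    (lam : ℕ) (hlam : 1 ≤ lam)
    (hlam_lt : ∀ j, (lam : ℝ) * ℓ j < s j)
    (t : ℕ) (ht : 1 ≤ t)
    (hn_lt : n < ∑ k ∈ Finset.range (lam + 1), (latticePts ((k : ℝ) • P)).ncard)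
    (ht_gt : (n : ℝ) - ∏ j, ((s j : ℝ) - lam * ℓ j) < t) :
    ∀ y : Fin n → Fq,
      ∃ Q : MvPolynomial (Fin (m + 1)) Fq, Q ≠ 0 ∧
        (∀ u ∈ Q.support, (fun j => (u j : ℝ)) ∈ (lam : ℝ) • pyr P) ∧
        (∀ j : Fin n, MvPolynomial.eval (Fin.snoc (p j) (y j)) Q = 0) ∧
        ∀ f : MvPolynomial (Fin m) Fq,
          (∀ u ∈ f.support, (fun j => (u j : ℝ)) ∈ P) →
          t ≤ (Finset.univ.filter (fun j : Fin n => MvPolynomial.eval (p j) f = y j)).card →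
          MvPolynomial.aeval (Fin.snoc MvPolynomial.X f) Q = 0 := by
  obtain ⟨V, rfl⟩ := hP
  obtain rfl : ℓ = axisWidth _ := funext hℓ
  obtain rfl : (fun j => (Sbox j).card) = s := funext hs
  have bounded := ((V.finite_toSet.image fun v j => (v j : ℝ)).isCompact_convexHull ℝ).isBounded
  exact basic_list_decoding_proj_general (convex_convexHull ℝ _) bounded hPne hPpos p hSbox0 hboxS
    (fun j => (hlam_lt j).le) (by rwa [Fintype.card_fin]) (by rwa [Fintype.card_fin])
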